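/- arXiv:2512.12714 — 5 statements merged into one kernel-verified Lean document; each statement's English description precedes it below -/
import Mathlib

section
/- Let S be a commutative ring, I ⊆ S an ideal, n ≥ 1 a natural number, and M an n×n matrix over S whose image in the matrix ring over S/I is nilpotent. Then for every k ≥ 1 there exists N such that for all m ≥ N, every entry of the matrix power M^m lies in the ideal power I^k. (In particular, the powers of M converge to 0 in the I-adic topology.) -/
theorem matrix_power_entries_in_ideal_power
    {S : Type*} [CommRing S] (I : Ideal S) (n : ℕ) (hn : 1 ≤ n)
    (M : Matrix (Fin n) (Fin n) S)
    (hnil : IsNilpotent (M.map (Ideal.Quotient.mk I))) :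
    ∀ k : ℕ, 1 ≤ k → ∃ N : ℕ, ∀ m : ℕ, N ≤ m → ∀ i j : Fin n, (M ^ m) i j ∈ I ^ k := by
  obtain ⟨r, hr⟩ := hnil
  have h1 : ∀ i j, (M ^ r) i j ∈ I := by
    intro i j
    rw [← Ideal.Quotient.eq_zero_iff_mem]
    have h2 : (M ^ r).map (Ideal.Quotient.mk I) = 0 := by
      rw [← hr]
      exact map_pow (Ideal.Quotient.mk I).mapMatrix M r
    exact congrFun (congrFun h2 i) j
  have h3 : ∀ k : ℕ, ∀ i j, (M ^ (r * k)) i j ∈ I ^ k := by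
    intro k
    induction k with
    | zero => intro i j; simp
    | succ k ih =>
      intro i j
      rw [Nat.mul_succ, pow_succ, pow_add M, Matrix.mul_apply]
      exact Ideal.sum_mem _ fun l _ => Ideal.mul_mem_mul (ih i l) (h1 l j)
  intro k _
  refine ⟨r * k, fun m hm i j => ?_⟩
  obtain ⟨d, rfl⟩ := Nat.exists_eq_add_of_le hm
  rw [pow_add M, Matrix.mul_apply]
  exact Ideal.sum_mem _ fun l _ => Ideal.mul_mem_right _ _ (h3 k i l)
end

section
/- Every entry of the matrix A⁸ lies in the ideal I = (3, h) of R; consequently the image of A in M₈(R/I) is nilpotent (indeed its 8th power is zero). -/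
noncomputable section

instance : Fact (Nat.Prime 3) := ⟨by norm_num⟩

/-- The 3-adic integers. -/
abbrev Z3 : Type := ℤ_[3]

/-- The power series ring `ℤ₃⟦h⟧`. -/
abbrev S3 : Type := PowerSeries Z3

/-- The power series variable `h`. -/
def hS : S3 := PowerSeries.X

open Polynomial in
/-- The polynomial `X² + 1 − h` over `ℤ₃⟦h⟧`. -/
def pR : Polynomial S3 := X ^ 2 + C (1 - hS)

/-- The ring `R = ℤ₃⟦h⟧[c]/(c² + 1 − h)`. -/
abbrev R : Type := AdjoinRoot pR

/-- The square root `c` of `h − 1` in `R`. -/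
def c : R := AdjoinRoot.root pR

/-- The element `h` of `R`. -/
def h : R := AdjoinRoot.of pR hS

/-- The ideal `I = (3, h)` of `R`. -/
def I : Ideal R := Ideal.span {(3 : R), h}

/-- The last column of the companion matrix `A`. -/
def lastCol : Fin 8 → R :=
  ![3, 3 * c, h - 9, -9 * c, -6 * h + 12, -(h + 6) * c, -3 * h + 3, -3 * c]

/-- The companion matrix `A`. -/
def A : Matrix (Fin 8) (Fin 8) R :=
  Matrix.of fun i j => if j = (7 : Fin 8) then lastCol i
    else if (i : ℕ) = (j : ℕ) + 1 then 1 else 0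

/-- The matrix `B`. -/
def B : Matrix (Fin 8) (Fin 8) R :=
  Ring.inverse (h - 17) •
    ( (c * (6 * h ^ 2 - 111 * h + 361)) • A ^ 7
    + (17 * h ^ 3 - 334 * h ^ 2 + 1377 * h - 1124) • A ^ 6
    + (3 * c * (5 * h ^ 3 - 99 * h ^ 2 + 416 * h - 354)) • A ^ 5
    + (3 * h ^ 4 - 18 * h ^ 3 - 566 * h ^ 2 + 3134 * h - 2617) • A ^ 4
    + (c * (h ^ 4 - 56 * h ^ 3 + 855 * h ^ 2 - 4069 * h + 5509)) • A ^ 3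
    + (3 * h ^ 4 - 114 * h ^ 3 + 1323 * h ^ 2 - 4564 * h + 3032) • A ^ 2
    + (3 * c * (h ^ 3 - 17 * h ^ 2 + 48 * h - 128)) • A
    + (h ^ 4 - 44 * h ^ 3 + 579 * h ^ 2 - 2301 * h + 1557) • (1 : Matrix (Fin 8) (Fin 8) R))

def shiftZ : Matrix (Fin 8) (Fin 8) ℤ :=
  Matrix.of fun i j => if (i : ℕ) = (j : ℕ) + 1 then 1 else 0

def shiftK (k : ℕ) : Matrix (Fin 8) (Fin 8) ℤ :=
  Matrix.of fun i j => if (i : ℕ) = (j : ℕ) + k then 1 else 0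

lemma shiftZ_pow : shiftZ ^ 8 = 0 := by
  have h2 : shiftZ * shiftZ = shiftK 2 := by decide +kernel
  have h4 : shiftK 2 * shiftK 2 = shiftK 4 := by decide +kernel
  have h8 : shiftK 4 * shiftK 4 = 0 := by decide +kernel
  calc shiftZ ^ 8 = ((shiftZ * shiftZ) * (shiftZ * shiftZ)) *
        ((shiftZ * shiftZ) * (shiftZ * shiftZ)) := by noncomm_ring
    _ = 0 := by rw [h2, h4, h8]

lemma three_mk : (3 : R ⧸ I) = 0 := by
  have : Ideal.Quotient.mk I (3 : R) = 0 :=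
    Ideal.Quotient.eq_zero_iff_mem.mpr (Ideal.subset_span (by simp))
  simpa only [map_ofNat] using this

lemma h_mk : Ideal.Quotient.mk I h = 0 :=
  Ideal.Quotient.eq_zero_iff_mem.mpr (Ideal.subset_span (by simp))

lemma lastCol_mk (i : Fin 8) : Ideal.Quotient.mk I (lastCol i) = 0 := by
  have h3 := three_mk
  have h6 : (6 : R ⧸ I) = 0 := by linear_combination 2 * h3
  have h9 : (9 : R ⧸ I) = 0 := by linear_combination 3 * h3
  have h12 : (12 : R ⧸ I) = 0 := by linear_combination 4 * h3
  fin_cases i <;>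
    simp [lastCol, map_add, map_sub, map_mul, map_neg, map_ofNat, h_mk, h3, h6, h9, h12]

lemma A_mk : A.map (Ideal.Quotient.mk I) = shiftZ.map (Int.castRingHom (R ⧸ I)) := by
  ext i j
  simp only [A, shiftZ, Matrix.map_apply, Matrix.of_apply]
  by_cases hj : j = 7
  · subst hj
    have : ¬ ((i : ℕ) = ((7 : Fin 8) : ℕ) + 1) := by
      have := i.isLt
      change ¬ ((i : ℕ) = 7 + 1)
      omega
    rw [if_pos rfl, if_neg this, lastCol_mk, map_zero]
  · rw [if_neg hj]
    split_ifs <;> simp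

lemma A_mk_pow : (A.map (Ideal.Quotient.mk I)) ^ 8 = 0 := by
  rw [A_mk, ← RingHom.mapMatrix_apply, ← map_pow, shiftZ_pow, map_zero]

theorem A_pow_eight_entries_in_I :
    (∀ i j : Fin 8, (A ^ 8) i j ∈ I) ∧
      (A.map (Ideal.Quotient.mk I)) ^ 8 = 0 := by
  refine ⟨fun i j => ?_, A_mk_pow⟩
  have key := A_mk_pow
  rw [← RingHom.mapMatrix_apply, ← map_pow] at key
  exact Ideal.Quotient.eq_zero_iff_mem.mp (congrFun (congrFun key i) j)
end
end

section
/- Every entry of the matrix B⁸ lies in the ideal I = (3, h) of R; consequently the image of B in M₈(R/I) is nilpotent. (This is the key step showing that for any x ∈ R, viewed as a power series in h, the substitution x(B) converges in the (3, h)-adic topology.) -/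
noncomputable section

lemma three_mem : (3 : R) ∈ I := Ideal.subset_span (by simp)

lemma h_mem : h ∈ I := Ideal.subset_span (by simp)

lemma mem_of_comb (x a b : R) (e : x = a * 3 + b * h) : x ∈ I := by
  rw [e]
  exact I.add_mem (I.mul_mem_left _ three_mem) (I.mul_mem_left _ h_mem)

lemma lastCol_mem (i : Fin 8) : lastCol i ∈ I := by
  fin_cases i
  · exact mem_of_comb _ 1 0 (by simp [lastCol])
  · exact mem_of_comb _ c 0 (by simp [lastCol]; ring)
  · exact mem_of_comb _ (-3) 1 (by simp [lastCol]; ring)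
  · exact mem_of_comb _ (-3 * c) 0 (by simp [lastCol]; ring)
  · exact mem_of_comb _ 4 (-6) (by simp [lastCol]; ring)
  · exact mem_of_comb _ (-2 * c) (-c) (by simp [lastCol]; ring)
  · exact mem_of_comb _ 1 (-3) (by simp [lastCol]; ring)
  · exact mem_of_comb _ (-c) 0 (by simp [lastCol]; ring)

lemma map_A : (Ideal.Quotient.mk I).mapMatrix A
    = (Int.castRingHom (R ⧸ I)).mapMatrix shiftZ := by
  ext i j
  simp only [RingHom.mapMatrix_apply, Matrix.map_apply, A, shiftZ, Matrix.of_apply]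
  by_cases hj : j = 7
  · have : ¬ ((i : ℕ) = (j : ℕ) + 1) := by subst hj; have := i.2; simp; omega
    rw [if_pos hj, if_neg this, map_zero]
    exact Ideal.Quotient.eq_zero_iff_mem.mpr (lastCol_mem i)
  · rw [if_neg hj]; split_ifs <;> simp

lemma map_A_pow : ((Ideal.Quotient.mk I).mapMatrix A) ^ 8 = 0 := by
  rw [map_A, ← map_pow, shiftZ_pow, map_zero]

/-- Any `r • (A·(polynomial in A) + k)` with `k ∈ I` has vanishing eighth power modulo `I`. -/
lemma key (r a7 a6 a5 a4 a3 a2 a1 k : R) (hk : k ∈ I) :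
    ((Ideal.Quotient.mk I).mapMatrix (r • (a7 • A ^ 7 + a6 • A ^ 6 + a5 • A ^ 5 + a4 • A ^ 4
      + a3 • A ^ 3 + a2 • A ^ 2 + a1 • A + k • (1 : Matrix (Fin 8) (Fin 8) R)))) ^ 8 = 0 := by
  set M : Matrix (Fin 8) (Fin 8) R := r • (a7 • A ^ 6 + a6 • A ^ 5 + a5 • A ^ 4 + a4 • A ^ 3
      + a3 • A ^ 2 + a2 • A + a1 • 1) with hM
  have e : r • (a7 • A ^ 7 + a6 • A ^ 6 + a5 • A ^ 5 + a4 • A ^ 4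
      + a3 • A ^ 3 + a2 • A ^ 2 + a1 • A + k • (1 : Matrix (Fin 8) (Fin 8) R))
      = A * M + (r * k) • 1 := by
    simp only [hM, mul_smul_comm, mul_add, ← pow_succ', mul_one, smul_add, smul_smul, ← pow_two]
  have hc : Commute A M := by
    refine Commute.smul_right ?_ _
    have hp (a : R) (n : ℕ) : Commute A (a • A ^ n) :=
      ((Commute.refl A).pow_right n).smul_right a
    exact ((((((hp _ _).add_right (hp _ _)).add_right (hp _ _)).add_right (hp _ _)).add_right
      (hp _ _)).add_right ((Commute.refl A).smul_right _)).add_right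
      ((Commute.one_right A).smul_right _)
  have hz : (Ideal.Quotient.mk I).mapMatrix ((r * k) • (1 : Matrix (Fin 8) (Fin 8) R)) = 0 := by
    ext i j
    simp only [RingHom.mapMatrix_apply, Matrix.map_apply, Matrix.smul_apply, smul_eq_mul,
      Matrix.zero_apply]
    exact Ideal.Quotient.eq_zero_iff_mem.mpr
      (I.mul_mem_right _ (I.mul_mem_left _ hk))
  rw [e, map_add, hz, add_zero, map_mul, (hc.map _).mul_pow, map_A_pow, zero_mul]

lemma map_B_pow : ((Ideal.Quotient.mk I).mapMatrix B) ^ 8 = 0 :=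
  key _ _ _ _ _ _ _ _ _
    (mem_of_comb _ 519 (h ^ 3 - 44 * h ^ 2 + 579 * h - 2301) (by ring))

theorem B_pow_eight_entries_in_I :
    (∀ i j : Fin 8, (B ^ 8) i j ∈ I) ∧
      IsNilpotent (B.map (Ideal.Quotient.mk I)) := by
  refine ⟨fun i j => ?_, 8, map_B_pow⟩
  have e := map_B_pow
  rw [← map_pow] at e
  exact Ideal.Quotient.eq_zero_iff_mem.mp (congrFun (congrFun e i) j)
end
end

section
/- Let p be a prime, let σ be a p-cycle in the symmetric group Σ_p and P = ⟨σ⟩ the cyclic subgroup it generates, and let K = Σ_r × Σ_{p−r} ≤ Σ_p be the setwise stabilizer of a subset T of size r with 0 < r < p. Then the action of P by right multiplication on the set K\Σ_p of right cosets { Kg : g ∈ Σ_p } is free: if Kgx = Kg for some g ∈ Σ_p and x ∈ P, then x = 1. -/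
open Pointwise

theorem free_action_on_right_cosets
    (p : ℕ) (hp : p.Prime) (σ : Equiv.Perm (Fin p))
    (hcyc : σ.IsCycle) (hsupp : σ.support = Finset.univ)
    (T : Finset (Fin p)) (hT0 : 0 < T.card) (hTp : T.card < p)
    (K : Subgroup (Equiv.Perm (Fin p)))
    (hK : K = MulAction.stabilizer (Equiv.Perm (Fin p)) T)
    (g : Equiv.Perm (Fin p)) (x : Equiv.Perm (Fin p))
    (hx : x ∈ Subgroup.zpowers σ)
    (hfix : (K : Set (Equiv.Perm (Fin p))) * {g * x} =
            (K : Set (Equiv.Perm (Fin p))) * {g}) :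
    x = 1 := by
  by_contra hx1
  haveI : Fact p.Prime := ⟨hp⟩
  have hσ : orderOf σ = p := by
    rw [hcyc.orderOf, hsupp]; simp
  have hxo : orderOf x = p := by
    refine orderOf_eq_prime ?_ hx1
    have h := orderOf_dvd_of_mem_zpowers hx
    rw [hσ] at h
    exact orderOf_dvd_iff_pow_eq_one.mp h
  have hz : Subgroup.zpowers x = Subgroup.zpowers σ := by
    apply Subgroup.eq_of_le_of_card_ge
    · rwa [Subgroup.zpowers_le]
    · rw [Nat.card_zpowers, Nat.card_zpowers, hσ, hxo]
  have hmem : g * x ∈ (K : Set (Equiv.Perm (Fin p))) * {g} := by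
    rw [← hfix]
    exact ⟨1, K.one_mem, g * x, rfl, one_mul _⟩
  obtain ⟨k, hk, g', hg', hkg⟩ := hmem
  rw [Set.mem_singleton_iff] at hg'
  subst hg'
  change k * g' = g' * x at hkg
  have hkT : k • T = T := by
    rw [hK] at hk
    exact hk
  have hxS : x ∈ MulAction.stabilizer (Equiv.Perm (Fin p)) (g'⁻¹ • T) := by
    rw [MulAction.mem_stabilizer_iff, smul_smul]
    have : x * g'⁻¹ = g'⁻¹ * k := by
      rw [mul_inv_eq_iff_eq_mul, mul_assoc, hkg, inv_mul_cancel_left]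
    rw [this, mul_smul, hkT]
  have hle : Subgroup.zpowers σ ≤ MulAction.stabilizer (Equiv.Perm (Fin p)) (g'⁻¹ • T) := by
    rw [← hz, Subgroup.zpowers_le]
    exact hxS
  have hcard : (g'⁻¹ • T).card = T.card := Finset.card_smul_finset _ _
  obtain ⟨a, ha⟩ : (g'⁻¹ • T).Nonempty := by
    rw [← Finset.card_pos, hcard]; exact hT0
  have huniv : g'⁻¹ • T = Finset.univ := by
    rw [Finset.eq_univ_iff_forall]
    intro b
    have hne : ∀ c, σ c ≠ c := fun c => by
      rw [← Equiv.Perm.mem_support, hsupp]; exact Finset.mem_univ c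
    obtain ⟨n, hn⟩ := hcyc.exists_zpow_eq (hne a) (hne b)
    have h := hle (Subgroup.zpow_mem_zpowers σ n)
    rw [MulAction.mem_stabilizer_iff] at h
    rw [← h, ← hn]
    exact Finset.smul_mem_smul_finset (a := σ ^ n) ha
  rw [huniv, Finset.card_univ, Fintype.card_fin] at hcard
  omega
end

section
/- Let p be a prime. The conjugation action of the symmetric group Σ_p on the set of ordered pairs (σ, τ) of commuting elements of Σ_p satisfying σ^p = 1 and τ^p = 1 has exactly p + 2 orbits. -/
/-- Simultaneous conjugation relation on pairs of commuting `p`-torsion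
permutations. -/
def simConjRel (p : ℕ)
    (x y : {st : Equiv.Perm (Fin p) × Equiv.Perm (Fin p) //
      Commute st.1 st.2 ∧ st.1 ^ p = 1 ∧ st.2 ^ p = 1}) : Prop :=
  ∃ g : Equiv.Perm (Fin p), g * x.1.1 * g⁻¹ = y.1.1 ∧ g * x.1.2 * g⁻¹ = y.1.2

theorem aux_cycle (p : ℕ) (hp : p.Prime) (s : Equiv.Perm (Fin p)) (h : s ^ p = 1) (h1 : s ≠ 1) :
    s.IsCycle ∧ s.support = Finset.univ := by
  have ho : orderOf s = p := (hp.eq_one_or_self_of_dvd _ (orderOf_dvd_of_pow_eq_one h)).resolve_left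
    (by rwa [orderOf_eq_one_iff])
  have hc : s.IsCycle := Equiv.Perm.isCycle_of_prime_order' (by rwa [ho])
    (by rw [ho, Fintype.card_fin]; have := hp.pos; omega)
  refine ⟨hc, ?_⟩
  rw [← Finset.card_eq_iff_eq_univ, ← hc.orderOf, ho, Fintype.card_fin]

theorem aux_conj (p : ℕ) (s c : Equiv.Perm (Fin p)) (hs : s.IsCycle ∧ s.support = Finset.univ)
    (hc : c.IsCycle ∧ c.support = Finset.univ) : ∃ g : Equiv.Perm (Fin p), g * s * g⁻¹ = c := by
  rw [← isConj_iff]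
  exact (hs.1.isConj_iff hc.1).2 (by rw [hs.2, hc.2])

theorem aux_comm (p : ℕ) (hp : p.Prime) (c t : Equiv.Perm (Fin p))
    (hc : c.IsCycle ∧ c.support = Finset.univ) (h : Commute c t) (ho : orderOf c = p) :
    ∃ k : Fin p, t = c ^ (k : ℕ) := by
  have hm : ∀ x, c x ≠ x := fun x => by
    rw [← Equiv.Perm.mem_support, hc.2]; exact Finset.mem_univ _
  let z : Fin p := ⟨0, hp.pos⟩
  obtain ⟨k, hk, hk2⟩ := (hc.1.sameCycle (hm z) (hm (t z))).exists_pow_eq'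
  have hkp : k < p := by
    have : (c.cycleOf z).support.card ≤ p := by
      simpa using Finset.card_le_univ (c.cycleOf z).support
    omega
  refine ⟨⟨k, hkp⟩, ?_⟩
  ext x : 1
  obtain ⟨j, hj⟩ := (hc.1.sameCycle (hm z) (hm x)).exists_nat_pow_eq
  have h1 : (t * c ^ j) z = (c ^ j * t) z := by rw [(h.pow_left j).eq]
  simp only [Equiv.Perm.mul_apply] at h1
  rw [← hj, h1, ← hk2, ← Equiv.Perm.mul_apply, ← Equiv.Perm.mul_apply, ← pow_add, ← pow_add,
    add_comm]

theorem aux_equiv (p : ℕ) : Equivalence (simConjRel p) where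
  refl x := ⟨1, by simp, by simp⟩
  symm := by
    rintro x y ⟨g, h1, h2⟩
    exact ⟨g⁻¹, by rw [← h1]; group, by rw [← h2]; group⟩
  trans := by
    rintro x y z ⟨g, h1, h2⟩ ⟨k, h3, h4⟩
    exact ⟨k * g, by rw [← h3, ← h1]; group, by rw [← h4, ← h2]; group⟩

/-- The conjugation action of `Σ_p` on commuting pairs of `p`-torsion elements
has exactly `p + 2` orbits. -/
theorem card_orbits_commuting_p_torsion_pairs (p : ℕ) (hp : p.Prime) :
    Nat.card (Quot (simConjRel p)) = p + 2 := by
  obtain ⟨c, hc⟩ : ∃ c : Equiv.Perm (Fin p), c.IsCycle ∧ c.support = Finset.univ := by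
    obtain ⟨n, rfl⟩ := Nat.exists_eq_add_of_le' hp.two_le
    exact ⟨finRotate (n + 2), isCycle_finRotate, support_finRotate⟩
  have ho : orderOf c = p := by rw [hc.1.orderOf, hc.2]; simp
  have hcp : c ^ p = 1 := by rw [← orderOf_dvd_iff_pow_eq_one, ho]
  have hc1 : c ≠ 1 := hc.1.ne_one
  let f : Option (Option (Fin p)) → {st : Equiv.Perm (Fin p) × Equiv.Perm (Fin p) //
      Commute st.1 st.2 ∧ st.1 ^ p = 1 ∧ st.2 ^ p = 1} := fun o => match o with
    | none => ⟨(1, 1), Commute.one_left _, one_pow _, one_pow _⟩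
    | some none => ⟨(1, c), Commute.one_left _, one_pow _, hcp⟩
    | some (some k) => ⟨(c, c ^ (k : ℕ)), (Commute.refl c).pow_right _, hcp, by
        rw [← pow_mul, mul_comm, pow_mul, hcp, one_pow]⟩
  have hb : Function.Bijective (fun o => Quot.mk (simConjRel p) (f o)) := by
    constructor
    · intro a b hab
      obtain ⟨g, h1, h2⟩ : simConjRel p (f a) (f b) := ((aux_equiv p).quot_mk_eq_iff _ _).1 hab
      rcases a with _ | _ | k <;> rcases b with _ | _ | l <;>
        simp only [f, mul_one, mul_inv_cancel, conj_eq_one_iff] at h1 h2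
      · rfl
      · exact absurd h2.symm hc1
      · exact absurd h1.symm hc1
      · exact absurd h2 hc1
      · rfl
      · exact absurd h1.symm hc1
      · exact absurd h1 hc1
      · exact absurd h1 hc1
      · rw [← conj_pow, h1] at h2
        have := pow_injOn_Iio_orderOf (x := c) (by simp [ho]) (by simp [ho]) h2
        rw [Fin.ext this]
    · intro q
      induction q using Quot.ind with | _ x => ?_
      obtain ⟨⟨s, t⟩, hcm, hs, ht⟩ := x
      simp only at hcm hs ht
      suffices h : ∃ o, simConjRel p ⟨(s, t), hcm, hs, ht⟩ (f o) by
        obtain ⟨o, h⟩ := h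
        exact ⟨o, (Quot.sound h).symm⟩
      by_cases h1 : s = 1
      · by_cases h2 : t = 1
        · exact ⟨none, 1, by simp [f, h1], by simp [f, h2]⟩
        · obtain ⟨g, hg⟩ := aux_conj p t c (aux_cycle p hp t ht h2) hc
          exact ⟨some none, g, by simp [f, h1], hg⟩
      · obtain ⟨g, hg⟩ := aux_conj p s c (aux_cycle p hp s hs h1) hc
        have hcm' : Commute c (g * t * g⁻¹) := by
          rw [← hg]
          exact (Commute.conj_iff g).2 hcm
        obtain ⟨k, hk⟩ := aux_comm p hp c _ hc hcm' ho
        exact ⟨some (some k), g, hg, hk⟩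
  rw [← Nat.card_eq_of_bijective _ hb]
  simp
end
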